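/- arXiv:2407.03851 — 8 statements merged into one kernel-verified Lean document; each statement's English description precedes it below -/
import Mathlib

section
/- Multi-projection deviation bound: let d ≥ 2, 0 < δ < r < R, D ≥ 0, and let φ : B_R^d → ℝ be a C² function whose second derivative has operator norm at most D at every point. Let β_1, …, β_m ∈ ℝ^d be unit vectors and p_i = −(r−δ)β_i. Given x_0 with ‖x_0‖ ≤ r, define recursively x_i = x_{i−1} + t_i β_i with t_i = max(0, −(⟪β_i, x_{i−1}⟫ + (r−δ))), and y_0 = φ(x_0), y_i = y_{i−1} + t_i·⟪β_i, ∇φ(p_i)⟫. Then |y_m − φ(x_m)| ≤ (3D/√2)·(d−1)·√r·δ^(1/2)·S_m, where S_m = Σ_{i=1}^m t_i. -/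
/-!
Each step contributes an error `t_i · D · √(2rδ)`. If `t_i > 0`, every point `z` of the segment
from `x_{i-1}` to `x_i` satisfies `‖z‖ ≤ r` and `⟪β_i, z⟫ ≤ -(r - δ)`, i.e. it lies in a spherical
cap of height `δ`; expanding the square gives
`‖z - p_i‖² ≤ r² - (r - δ)² ≤ 2rδ` (`cap_segment`). The bound on the second derivative makes
`∇φ` `D`-Lipschitz on the ball (`fderiv_lipschitz`), so the mean value inequality for `φ` minus its
linearisation at `p_i` bounds the error of the step (`step_bound`). Summation yields the constant
`D √(2rδ)`, and `√2 ≤ (3 / √2)(d - 1)` because `d ≥ 2`.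
-/

open scoped RealInnerProductSpace

/-- While `x` moves in direction `b` until `⟪b, ·⟫` reaches `-(r - δ)`, it stays in the ball of
radius `r` and within `√(2rδ)` of the centre `-(r - δ) • b` of the base of the cap. -/
lemma cap_segment {E : Type*} [NormedAddCommGroup E] [InnerProductSpace ℝ E]
    {δ r t s : ℝ} (hδ : 0 < δ) (hδr : δ < r) {b x : E} (hb : ‖b‖ = 1) (hx : ‖x‖ ≤ r)
    (ht : t = -(⟪b, x⟫ + (r - δ))) (hs0 : 0 ≤ s) (hst : s ≤ t) :
    ‖x + s • b‖ ≤ r ∧ ‖x + s • b - (-(r - δ) • b)‖ ≤ Real.sqrt (2 * r * δ) := by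
  have hr : 0 < r := hδ.trans hδr
  have hxx : ‖x‖ ^ 2 ≤ r ^ 2 := by gcongr
  -- `‖b‖ = 1` makes the quadratic in `c` monic.
  have key : ∀ c : ℝ, ‖x + c • b‖ ^ 2 = ‖x‖ ^ 2 + 2 * c * ⟪b, x⟫ + c ^ 2 := by
    intro c
    rw [norm_add_sq_real, inner_smul_right, norm_smul, hb, real_inner_comm, Real.norm_eq_abs,
      mul_one, sq_abs]
    ring
  have hz : ‖x + s • b‖ ^ 2 ≤ r ^ 2 := by
    rw [key]
    nlinarith
  refine ⟨abs_le_of_sq_le_sq' hz hr.le |>.2, Real.le_sqrt_of_sq_le ?_⟩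
  have e : x + s • b - (-(r - δ) • b) = x + (s + (r - δ)) • b := by
    rw [neg_smul, sub_neg_eq_add, add_smul, add_assoc]
  rw [key] at hz
  rw [e, key]
  nlinarith [mul_nonneg (sub_nonneg.2 hδr.le) (sub_nonneg.2 hst)]

lemma fderiv_lipschitz {E : Type*} [NormedAddCommGroup E] [NormedSpace ℝ E]
    {R D : ℝ} {φ : E → ℝ} (hφ : ContDiffOn ℝ 2 φ (Metric.ball 0 R))
    (hφD : ∀ z ∈ Metric.ball (0 : E) R,
      ‖iteratedFDerivWithin ℝ 2 φ (Metric.ball 0 R) z‖ ≤ D)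
    {z p : E} (hz : z ∈ Metric.ball (0 : E) R) (hp : p ∈ Metric.ball (0 : E) R) :
    ‖fderiv ℝ φ z - fderiv ℝ φ p‖ ≤ D * ‖z - p‖ := by
  have ho : IsOpen (Metric.ball (0 : E) R) := Metric.isOpen_ball
  have hu : UniqueDiffOn ℝ (Metric.ball (0 : E) R) := ho.uniqueDiffOn
  have hd : DifferentiableOn ℝ (fderivWithin ℝ φ (Metric.ball 0 R)) (Metric.ball 0 R) :=
    (hφ.fderivWithin (m := 1) hu (by norm_num)).differentiableOn (by norm_num)
  have := (convex_ball (0 : E) R).norm_image_sub_le_of_norm_fderivWithin_le (𝕜 := ℝ) hd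
    (C := D) (fun w hw => ?_) hp hz
  · rwa [fderivWithin_of_isOpen ho hz, fderivWithin_of_isOpen ho hp] at this
  · rw [← norm_iteratedFDerivWithin_one _ (hu w hw), norm_iteratedFDerivWithin_fderivWithin hu hw]
    exact hφD w hw

/-- One projection step keeps the iterate in the ball of radius `r`, and the linear prediction of the
increment of `φ` from the gradient at `-(r - δ) • b` has error at most `D √(2rδ) t`. -/
lemma step_bound {E : Type*} [NormedAddCommGroup E] [InnerProductSpace ℝ E] [CompleteSpace E]
    {δ r R D t : ℝ} (hδ : 0 < δ) (hδr : δ < r) (hrR : r < R) (hD : 0 ≤ D)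
    {φ : E → ℝ} (hφ : ContDiffOn ℝ 2 φ (Metric.ball 0 R))
    (hφD : ∀ z ∈ Metric.ball (0 : E) R,
      ‖iteratedFDerivWithin ℝ 2 φ (Metric.ball 0 R) z‖ ≤ D)
    {b x : E} (hb : ‖b‖ = 1) (hx : ‖x‖ ≤ r) (ht : t = max 0 (-(⟪b, x⟫ + (r - δ)))) :
    ‖x + t • b‖ ≤ r ∧
      |t * ⟪b, gradient φ (-(r - δ) • b)⟫ - (φ (x + t • b) - φ x)|
        ≤ D * Real.sqrt (2 * r * δ) * t := by
  rcases le_total (-(⟪b, x⟫ + (r - δ))) 0 with h | h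
  · rw [max_eq_left h] at ht
    subst ht
    simpa using hx
  rw [max_eq_right h] at ht
  have ht0 : 0 ≤ t := ht ▸ h
  refine ⟨(cap_segment hδ hδr hb hx ht ht0 le_rfl).1, ?_⟩
  set p : E := -(r - δ) • b with hp
  have hpR : p ∈ Metric.ball (0 : E) R := by
    rw [mem_ball_zero_iff, hp, norm_smul, hb, norm_neg, Real.norm_of_nonneg (by linarith)]
    linarith
  have hg : ⟪b, gradient φ p⟫ = fderiv ℝ φ p b := by
    rw [real_inner_comm, gradient, InnerProductSpace.toDual_symm_apply]
  have hseg : ∀ z ∈ segment ℝ x (x + t • b),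
      z ∈ Metric.ball (0 : E) R ∧ ‖z - p‖ ≤ Real.sqrt (2 * r * δ) := by
    intro z hz
    rw [segment_eq_image'] at hz
    obtain ⟨θ, ⟨h0, h1⟩, rfl⟩ := hz
    have := cap_segment hδ hδr hb hx ht (mul_nonneg h0 ht0) (mul_le_of_le_one_left ht0 h1)
    simp only [add_sub_cancel_left, smul_smul]
    exact ⟨mem_ball_zero_iff.2 (this.1.trans_lt hrR), this.2⟩
  have hmv := (convex_segment (𝕜 := ℝ) x (x + t • b)).norm_image_sub_le_of_norm_hasFDerivWithin_le'
    (𝕜 := ℝ) (f := φ) (f' := fderiv ℝ φ) (φ := fderiv ℝ φ p) (C := D * Real.sqrt (2 * r * δ))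
    (fun z hz => ((hφ.contDiffAt (Metric.isOpen_ball.mem_nhds (hseg z hz).1)).differentiableAt
      (by norm_num)).hasFDerivAt.hasFDerivWithinAt)
    (fun z hz => (fderiv_lipschitz hφ hφD (hseg z hz).1 hpR).trans
      (mul_le_mul_of_nonneg_left (hseg z hz).2 hD))
    (left_mem_segment ℝ _ _) (right_mem_segment ℝ _ _)
  rw [add_sub_cancel_left, map_smul, norm_smul, hb, mul_one, Real.norm_of_nonneg ht0,
    Real.norm_eq_abs, smul_eq_mul] at hmv
  rwa [hg, abs_sub_comm]

/-- **Multi-projection deviation bound.** Along the trajectory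
`x_i = x_{i−1} + t_i β_i`, `y_i = y_{i−1} + t_i ⟪β_i, ∇φ(p_i)⟫` with
`t_i = max(0, −(⟪β_i,x_{i−1}⟫ + (r−δ)))` and `p_i = −(r−δ)β_i`, the deviation of the value
`y_m` from `φ(x_m)` is controlled by the total path length `S_m = Σ t_i`. -/
theorem multi_projection_deviation_bound
    (d : ℕ) (hd : 2 ≤ d) (δ r R D : ℝ) (hδ : 0 < δ) (hδr : δ < r) (hrR : r < R) (hD : 0 ≤ D)
    (φ : EuclideanSpace ℝ (Fin d) → ℝ)
    (hφ : ContDiffOn ℝ 2 φ (Metric.ball 0 R))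
    (hφD : ∀ z ∈ Metric.ball (0 : EuclideanSpace ℝ (Fin d)) R,
      ‖iteratedFDerivWithin ℝ 2 φ (Metric.ball 0 R) z‖ ≤ D)
    (m : ℕ) (β : ℕ → EuclideanSpace ℝ (Fin d)) (hβ : ∀ i < m, ‖β i‖ = 1)
    (x : ℕ → EuclideanSpace ℝ (Fin d)) (hx0 : ‖x 0‖ ≤ r)
    (t : ℕ → ℝ) (ht : ∀ i < m, t i = max 0 (-(⟪β i, x i⟫ + (r - δ))))
    (hxrec : ∀ i < m, x (i+1) = x i + t i • β i)
    (y : ℕ → ℝ) (hy0 : y 0 = φ (x 0))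
    (hyrec : ∀ i < m, y (i+1) = y i + t i * ⟪β i, gradient φ (-(r - δ) • β i)⟫) :
    |y m - φ (x m)| ≤ (3 * D / Real.sqrt 2) * ((d : ℝ) - 1) * Real.sqrt r *
      δ ^ ((1 : ℝ) / 2) * (∑ i ∈ Finset.range m, t i) := by
  have hr : 0 < r := hδ.trans hδr
  have main : ∀ n ≤ m, ‖x n‖ ≤ r ∧
      |y n - φ (x n)| ≤ D * Real.sqrt (2 * r * δ) * ∑ i ∈ Finset.range n, t i := by
    intro n
    induction n with
    | zero => intro _; simp [hx0, hy0]
    | succ n ih =>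
      intro hn
      obtain ⟨h1, h2⟩ := ih (by omega)
      obtain ⟨h3, h4⟩ := step_bound hδ hδr hrR hD hφ hφD (hβ n hn) h1 (ht n hn)
      rw [← hxrec n hn] at h3 h4
      refine ⟨h3, ?_⟩
      rw [hyrec n hn, Finset.sum_range_succ, mul_add]
      rw [abs_le] at *
      constructor <;> linarith [h2.1, h2.2, h4.1, h4.2]
  have hS : 0 ≤ ∑ i ∈ Finset.range m, t i :=
    Finset.sum_nonneg fun i hi => by
      rw [ht i (Finset.mem_range.1 hi)]
      exact le_max_left _ _
  refine (main m le_rfl).2.trans (mul_le_mul_of_nonneg_right ?_ hS)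
  rw [← Real.sqrt_eq_rpow, Real.sqrt_mul (by positivity), Real.sqrt_mul (by norm_num)]
  have hd' : (1 : ℝ) ≤ (d : ℝ) - 1 := by
    have : (2 : ℝ) ≤ d := by exact_mod_cast hd
    linarith
  have h2 : Real.sqrt 2 ≤ 3 / Real.sqrt 2 := by
    rw [le_div_iff₀ (by positivity), Real.mul_self_sqrt (by norm_num)]
    norm_num
  have h3 : Real.sqrt 2 ≤ 3 / Real.sqrt 2 * ((d : ℝ) - 1) :=
    h2.trans (le_mul_of_one_le_right (by positivity) hd')
  calc D * (Real.sqrt 2 * Real.sqrt r * Real.sqrt δ)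
      = Real.sqrt 2 * (D * Real.sqrt r * Real.sqrt δ) := by ring
    _ ≤ 3 / Real.sqrt 2 * ((d : ℝ) - 1) * (D * Real.sqrt r * Real.sqrt δ) := by gcongr
    _ = _ := by ring
end

section
/- Path length and deviation bound on a polytope: let d ≥ 2, r < R, D ≥ 0, 0 < δ ≤ r(1 − 1/√2), and let φ : B_R^d → ℝ be a C² function whose second derivative has operator norm at most D at every point. Let β_1, …, β_m ∈ ℝ^d be unit vectors with U_i = {x : ⟪β_i,x⟫ + (r−δ) ≥ 0} and 𝒫 = ∩_{i=1}^m U_i, and assume B̄_{r−δ}^d ⊆ 𝒫 ⊆ B̄_r^d. Let p_i = −(r−δ)β_i. Given x_0 with ‖x_0‖ ≤ r, define x_i = x_{i−1} + t_i β_i with t_i = max(0, −(⟪β_i, x_{i−1}⟫ + (r−δ))), and y_0 = φ(x_0), y_i = y_{i−1} + t_i·⟪β_i, ∇φ(p_i)⟫. Then S_m = Σ_{i=1}^m t_i ≤ ((1+√2)/2)·δ and |y_m − φ(x_m)| ≤ ((1+√2)/2)·(3D/√2)·(d−1)·√r·δ^(3/2). -/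
/-!
Write `ρ = r - δ`, so that `r ≤ √2 ρ`. A nontrivial step starts at a point `x` with
`⟪β, x⟫ = -ρ - t` and projects it onto the hyperplane `⟪β, ·⟫ = -ρ`; hence
`‖x + t β‖² = ‖x‖² - 2ρt - t²`. Summing, `2ρ S ≤ r² - ‖x_m‖²`, and as soon as one step is
nontrivial the trajectory stays at distance at least `ρ` from the origin (the last nontrivial step
ends on such a hyperplane). Therefore `2ρ S ≤ r² - ρ² = δ (r + ρ)`, which gives the length bound.

For the deviation, the segment of a nontrivial step lies in the spherical cap
`{z | ‖z‖ ≤ r, ⟪β, z⟫ ≤ -ρ}`, all of whose points are within `√(r² - ρ²) ≤ √(2rδ)` of its base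
centre `p = -ρ β`. Since `Dφ` is `D`-Lipschitz, the linearisation of `φ` at `p` predicts the
increment of `φ` along the step up to `D √(r² - ρ²) t` (`cap_linearization_error`). The sum is at
most `D √(2rδ) S`, and `√2 ≤ (3/√2)(d - 1)`.
-/

open scoped RealInnerProductSpace

/-- Points of the cap `{‖z‖ ≤ r, ⟪b, z⟫ ≤ -ρ}` are close to the centre `-ρ b` of its base. -/
theorem cap_dist_le {E : Type*} [NormedAddCommGroup E] [InnerProductSpace ℝ E]
    {b z : E} {ρ r : ℝ} (hb : ‖b‖ = 1) (hρ : 0 ≤ ρ) (hz : ‖z‖ ≤ r) (hbz : ⟪b, z⟫ ≤ -ρ) :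
    ‖z - (-ρ) • b‖ ≤ Real.sqrt (r ^ 2 - ρ ^ 2) := by
  apply Real.le_sqrt_of_sq_le
  rw [norm_sub_sq_real, norm_smul, hb, real_inner_smul_right, real_inner_comm, mul_one,
    Real.norm_eq_abs, sq_abs]
  have h1 : ‖z‖ ^ 2 ≤ r ^ 2 := by gcongr
  nlinarith

theorem fderiv_lipschitz_ball {E : Type*} [NormedAddCommGroup E] [NormedSpace ℝ E]
    {φ : E → ℝ} {R D : ℝ} (hφ : ContDiffOn ℝ 2 φ (Metric.ball 0 R))
    (hφD : ∀ z ∈ Metric.ball (0 : E) R,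
      ‖iteratedFDerivWithin ℝ 2 φ (Metric.ball 0 R) z‖ ≤ D)
    {p z : E} (hp : p ∈ Metric.ball (0 : E) R) (hz : z ∈ Metric.ball (0 : E) R) :
    ‖fderiv ℝ φ z - fderiv ℝ φ p‖ ≤ D * ‖z - p‖ := by
  have ho : IsOpen (Metric.ball (0 : E) R) := Metric.isOpen_ball
  have hd : DifferentiableOn ℝ (fderivWithin ℝ φ (Metric.ball 0 R)) (Metric.ball 0 R) :=
    (hφ.fderivWithin ho.uniqueDiffOn (m := 1) (by norm_num)).differentiableOn (by norm_num)
  have key := (convex_ball (0 : E) R).norm_image_sub_le_of_norm_fderivWithin_le hd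
    (C := D) (fun w hw => ?_) hp hz
  · rwa [fderivWithin_of_isOpen ho hp, fderivWithin_of_isOpen ho hz] at key
  · have h2 := hφD w hw
    rwa [← norm_iteratedFDerivWithin_fderivWithin (n := 1) ho.uniqueDiffOn hw,
      norm_iteratedFDerivWithin_one _ (ho.uniqueDiffOn w hw)] at h2

/-- Along a chord of the cap `{‖z‖ ≤ r, ⟪b, z⟫ ≤ -ρ}`, the derivative of `φ` at the base centre
predicts the increment of `φ` with relative error `D √(r² - ρ²)`. -/
theorem cap_linearization_error {E : Type*} [NormedAddCommGroup E] [InnerProductSpace ℝ E]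
    {φ : E → ℝ} {R D : ℝ} (hφ : ContDiffOn ℝ 2 φ (Metric.ball 0 R))
    (hD : 0 ≤ D) (hφD : ∀ z ∈ Metric.ball (0 : E) R,
      ‖iteratedFDerivWithin ℝ 2 φ (Metric.ball 0 R) z‖ ≤ D)
    {b u v : E} {ρ r : ℝ} (hb : ‖b‖ = 1) (hρ : 0 ≤ ρ) (hρr : ρ ≤ r) (hrR : r < R)
    (hu : ‖u‖ ≤ r) (hbu : ⟪b, u⟫ ≤ -ρ) (hv : ‖v‖ ≤ r) (hbv : ⟪b, v⟫ ≤ -ρ) :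
    |φ v - φ u - fderiv ℝ φ (-ρ • b) (v - u)| ≤ D * Real.sqrt (r ^ 2 - ρ ^ 2) * ‖v - u‖ := by
  have hconv : Convex ℝ (Metric.closedBall (0 : E) r ∩ {z | ⟪b, z⟫ ≤ -ρ}) :=
    (convex_closedBall 0 r).inter
      (convex_halfSpace_le (innerSL ℝ b).toLinearMap.isLinear (-ρ))
  have hsub : ∀ z : E, ‖z‖ ≤ r → z ∈ Metric.ball (0 : E) R := fun z hz => by
    simpa using hz.trans_lt hrR
  have hp : -ρ • b ∈ Metric.ball (0 : E) R := hsub _ (by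
    rw [norm_smul, hb, norm_neg, Real.norm_of_nonneg hρ]; linarith)
  rw [← Real.norm_eq_abs]
  refine hconv.norm_image_sub_le_of_norm_hasFDerivWithin_le' (f := φ) (f' := fderiv ℝ φ)
    (fun z hz => ?_) (fun z hz => ?_) ⟨by simpa using hu, hbu⟩ ⟨by simpa using hv, hbv⟩
  · have hz' := hsub z (by simpa using hz.1)
    exact (((hφ z hz').contDiffAt (Metric.isOpen_ball.mem_nhds hz')).differentiableAt
      (by norm_num)).hasFDerivAt.hasFDerivWithinAt
  · have hz1 : ‖z‖ ≤ r := by simpa using hz.1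
    exact (fderiv_lipschitz_ball hφ hφD hp (hsub z hz1)).trans
      (mul_le_mul_of_nonneg_left (cap_dist_le hb hρ hz1 hz.2) hD)

/-- **Path length and deviation bound on a polytope.** If
`0 < δ ≤ r(1 − 1/√2)` and the polytope `𝒫 = ∩_i {x : ⟪β_i,x⟫ + (r−δ) ≥ 0}` satisfies
`B̄_{r−δ}^d ⊆ 𝒫 ⊆ B̄_r^d`, then along the projection trajectory starting from any
`x_0` with `‖x_0‖ ≤ r` the total path length satisfies `S_m ≤ ((1+√2)/2)·δ` and
`|y_m − φ(x_m)| ≤ ((1+√2)/2)·(3D/√2)·(d−1)·√r·δ^(3/2)`. -/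
theorem path_length_and_deviation_bound
    (d : ℕ) (hd : 2 ≤ d) (δ r R D : ℝ) (hδ : 0 < δ) (hrR : r < R) (hD : 0 ≤ D)
    (hδr : δ ≤ r * (1 - 1 / Real.sqrt 2))
    (φ : EuclideanSpace ℝ (Fin d) → ℝ)
    (hφ : ContDiffOn ℝ 2 φ (Metric.ball 0 R))
    (hφD : ∀ z ∈ Metric.ball (0 : EuclideanSpace ℝ (Fin d)) R,
      ‖iteratedFDerivWithin ℝ 2 φ (Metric.ball 0 R) z‖ ≤ D)
    (m : ℕ) (β : ℕ → EuclideanSpace ℝ (Fin d)) (hβ : ∀ i < m, ‖β i‖ = 1)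
    (P : Set (EuclideanSpace ℝ (Fin d)))
    (hP : P = {x : EuclideanSpace ℝ (Fin d) | ∀ i < m, 0 ≤ ⟪β i, x⟫ + (r - δ)})
    (hPin : Metric.closedBall (0 : EuclideanSpace ℝ (Fin d)) (r - δ) ⊆ P)
    (hPout : P ⊆ Metric.closedBall (0 : EuclideanSpace ℝ (Fin d)) r)
    (x : ℕ → EuclideanSpace ℝ (Fin d)) (hx0 : ‖x 0‖ ≤ r)
    (t : ℕ → ℝ) (ht : ∀ i < m, t i = max 0 (-(⟪β i, x i⟫ + (r - δ))))
    (hxrec : ∀ i < m, x (i+1) = x i + t i • β i)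
    (y : ℕ → ℝ) (hy0 : y 0 = φ (x 0))
    (hyrec : ∀ i < m, y (i+1) = y i + t i * ⟪β i, gradient φ (-(r - δ) • β i)⟫) :
    (∑ i ∈ Finset.range m, t i) ≤ ((1 + Real.sqrt 2) / 2) * δ ∧
    |y m - φ (x m)| ≤ ((1 + Real.sqrt 2) / 2) * (3 * D / Real.sqrt 2) * ((d : ℝ) - 1) *
      Real.sqrt r * δ ^ ((3 : ℝ) / 2) := by
  have hs2 : Real.sqrt 2 ^ 2 = 2 := Real.sq_sqrt (by norm_num)
  have hs1 : 1 < Real.sqrt 2 := Real.lt_sqrt_of_sq_lt (by norm_num)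
  have hinv : 1 / Real.sqrt 2 = Real.sqrt 2 / 2 := by field_simp; linarith
  rw [hinv] at hδr
  have hr : 0 < r := by
    by_contra h
    have : Real.sqrt 2 < 2 := by nlinarith
    nlinarith [mul_nonneg (sub_nonneg.2 (not_lt.1 h)) (sub_nonneg.2 this.le)]
  set ρ := r - δ with hρdef
  have hρr : r * Real.sqrt 2 / 2 ≤ ρ := by linarith
  have hρ : 0 < ρ := lt_of_lt_of_le (by positivity) hρr
  have hρr' : ρ ≤ r := by linarith
  have hrρ : r ≤ Real.sqrt 2 * ρ := by nlinarith
  set K := D * Real.sqrt (r ^ 2 - ρ ^ 2) with hK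
  have inv : ∀ k ≤ m, 2 * ρ * (∑ i ∈ Finset.range k, t i) ≤ r ^ 2 - ‖x k‖ ^ 2 ∧ ‖x k‖ ≤ r ∧
      ((∑ i ∈ Finset.range k, t i) = 0 ∨ ρ ≤ ‖x k‖) ∧
      |y k - φ (x k)| ≤ K * ∑ i ∈ Finset.range k, t i := by
    intro k
    induction k with
    | zero =>
      intro _
      refine ⟨?_, hx0, Or.inl (by simp), by simp [hy0]⟩
      have : ‖x 0‖ ^ 2 ≤ r ^ 2 := by gcongr
      simpa using this
    | succ k ih =>
      intro hk
      have hkm : k < m := hk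
      obtain ⟨h1, h2, h3, h4⟩ := ih hkm.le
      have htk := ht k hkm
      have hxk := hxrec k hkm
      have hyk := hyrec k hkm
      have hb := hβ k hkm
      rw [Finset.sum_range_succ]
      rcases le_or_gt (-(⟪β k, x k⟫ + ρ)) 0 with hc | hc
      · rw [max_eq_left hc] at htk
        rw [htk, zero_smul, add_zero] at hxk
        rw [htk, zero_mul, add_zero] at hyk
        rw [htk, hxk, hyk, add_zero]
        exact ⟨h1, h2, h3, h4⟩
      · rw [max_eq_right hc.le] at htk
        have htpos : 0 < t k := htk ▸ hc
        have hin : ⟪β k, x k⟫ = -ρ - t k := by linarith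
        have hin' : ⟪β k, x (k+1)⟫ = -ρ := by
          rw [hxk, inner_add_right, real_inner_smul_right, real_inner_self_eq_norm_sq, hb, hin]
          ring
        have hn : ‖x (k+1)‖ ^ 2 = ‖x k‖ ^ 2 - 2 * ρ * t k - t k ^ 2 := by
          rw [hxk, norm_add_sq_real, real_inner_smul_right, real_inner_comm, hin, norm_smul, hb,
            Real.norm_of_nonneg htpos.le]
          ring
        have hle : ‖x (k+1)‖ ≤ r := by
          refine le_trans (abs_le_of_sq_le_sq' ?_ (norm_nonneg _)).2 h2
          nlinarith [mul_pos hρ htpos]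
        have hge : ρ ≤ ‖x (k+1)‖ := by
          have := abs_real_inner_le_norm (β k) (x (k+1))
          rwa [hin', hb, one_mul, abs_neg, abs_of_pos hρ] at this
        refine ⟨by nlinarith, hle, Or.inr hge, ?_⟩
        have herr := cap_linearization_error hφ hD hφD hb hρ.le hρr' hrR h2
          (by linarith : ⟪β k, x k⟫ ≤ -ρ) hle hin'.le
        have hdiff : x (k+1) - x k = t k • β k := by rw [hxk]; abel
        have hgrad : ⟪β k, gradient φ (-ρ • β k)⟫ = fderiv ℝ φ (-ρ • β k) (β k) := by
          rw [real_inner_comm, gradient, InnerProductSpace.toDual_symm_apply]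
        rw [hdiff, norm_smul, hb, Real.norm_of_nonneg htpos.le, map_smul, smul_eq_mul, mul_one,
          ← hgrad] at herr
        rw [hyk]
        rw [abs_le] at herr h4 ⊢
        constructor <;> linarith [herr.1, herr.2, h4.1, h4.2]
  obtain ⟨h1, h2, h3, h4⟩ := inv m le_rfl
  set S := ∑ i ∈ Finset.range m, t i with hS
  have hS1 : S ≤ ((1 + Real.sqrt 2) / 2) * δ := by
    rcases h3 with h3 | h3
    · rw [h3]; positivity
    · have h5 : ρ ^ 2 ≤ ‖x m‖ ^ 2 := by gcongr
      have h6 : 2 * ρ * S ≤ 2 * ρ * (((1 + Real.sqrt 2) / 2) * δ) := by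
        have : r ^ 2 - ρ ^ 2 = δ * (r + ρ) := by rw [hρdef]; ring
        nlinarith [mul_le_mul_of_nonneg_left hrρ hδ.le]
      exact le_of_mul_le_mul_left h6 (by positivity)
  refine ⟨hS1, h4.trans ?_⟩
  have hK' : K ≤ D * (Real.sqrt 2 * (Real.sqrt r * Real.sqrt δ)) := by
    rw [hK, ← Real.sqrt_mul hr.le, ← Real.sqrt_mul (by norm_num)]
    gcongr
    rw [hρdef]
    nlinarith
  have hpow : δ ^ ((3 : ℝ) / 2) = δ * Real.sqrt δ := by
    rw [Real.sqrt_eq_rpow, show (3 : ℝ) / 2 = 1 + 1 / 2 by norm_num, Real.rpow_add hδ,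
      Real.rpow_one]
  have hd' : (1 : ℝ) ≤ (d : ℝ) - 1 := by
    have : (2 : ℝ) ≤ d := by exact_mod_cast hd
    linarith
  have hconst : Real.sqrt 2 ≤ 3 / Real.sqrt 2 * ((d : ℝ) - 1) := by
    have : 3 / Real.sqrt 2 = 3 * (Real.sqrt 2 / 2) := by rw [← hinv]; ring
    rw [this]
    nlinarith
  calc K * S ≤ K * (((1 + Real.sqrt 2) / 2) * δ) :=
        mul_le_mul_of_nonneg_left hS1 (by positivity)
    _ ≤ D * (Real.sqrt 2 * (Real.sqrt r * Real.sqrt δ)) * (((1 + Real.sqrt 2) / 2) * δ) :=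
        mul_le_mul_of_nonneg_right hK' (by positivity)
    _ ≤ D * ((3 / Real.sqrt 2 * ((d : ℝ) - 1)) * (Real.sqrt r * Real.sqrt δ)) *
          (((1 + Real.sqrt 2) / 2) * δ) := by gcongr
    _ = _ := by rw [hpow]; ring
end

section
/- Image of the graph under a polytopal projection: let d ≥ 2, r < R, D ≥ 0, 0 < δ ≤ r(1 − 1/√2), and let φ : B_R^d → ℝ be a C² function whose second derivative has operator norm at most D at every point. Let β_1, …, β_m ∈ ℝ^d be unit vectors with U_i = {x : ⟪β_i,x⟫ + (r−δ) ≥ 0} and 𝒫 = ∩_{i=1}^m U_i, and assume B̄_{r−δ}^d ⊆ 𝒫 ⊆ B̄_r^d. Let p_i = −(r−δ)β_i, let π_i be the projection layer with parameters (β_i, a = r−δ, c_i = ⟪β_i, ∇φ(p_i)⟫), and let Π = π_m ∘ ⋯ ∘ π_1. Then: (i) Π(x, φ(x)) = (x, φ(x)) for every x ∈ 𝒫; and (ii) for every x ∈ B̄_r^d \ 𝒫, the point Π(x, φ(x)) lies in the ε-band Σ_φ^ε(∂𝒫) with ε = ((1+√2)/2)·(3D/√2)·(d−1)·√r·δ^(3/2),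 where ∂𝒫 is the topological boundary of 𝒫. -/
open scoped RealInnerProductSpace

/-- The projection layer on `ℝ^d × ℝ` with parameters `(β, a, c)`:
`π(x,y) = (x + t(x)·β, y + t(x)·c)` where `t(x) = max(0, −(⟪β,x⟫ + a))`. -/
noncomputable def projLayer {d : ℕ} (β : EuclideanSpace ℝ (Fin d)) (a c : ℝ) :
    EuclideanSpace ℝ (Fin d) × ℝ → EuclideanSpace ℝ (Fin d) × ℝ :=
  fun p => (p.1 + max 0 (-(⟪β, p.1⟫ + a)) • β, p.2 + max 0 (-(⟪β, p.1⟫ + a)) * c)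

/-- The `ε`-band of `f : Ω → ℝ` over `ω`:
`Σ_f^ε(ω) = {(x,y) ∈ (Ω ∩ ω) × ℝ : |f(x) − y| ≤ ε}`. -/
def epsBand {d : ℕ} (f : EuclideanSpace ℝ (Fin d) → ℝ)
    (Ω ω : Set (EuclideanSpace ℝ (Fin d))) (ε : ℝ) :
    Set (EuclideanSpace ℝ (Fin d) × ℝ) :=
  {p | p.1 ∈ Ω ∩ ω ∧ |f p.1 - p.2| ≤ ε}

/-- `iterComp f N = f (N-1) ∘ ⋯ ∘ f 1 ∘ f 0`. -/
def iterComp {α : Type*} (f : ℕ → α → α) : ℕ → α → α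
  | 0 => id
  | (k+1) => fun x => f k (iterComp f k x)

/-!
Each layer moves the `x`-coordinate by the orthogonal projection onto one half-space `U_i`.

*Landing on `∂𝒫`.* Write `s = r - δ`; the bound on `δ` says `r² ≤ 2s²`, so the cap of the ball
`B̄_r` cut off by `U_i` has half-angle at most 45°. Hence two caps that meet have normals with
nonnegative inner product (`inner_nonneg_of_caps_meet`), and projecting onto `U_k` never leaves an
earlier `U_i`: a point that left it would lie in both caps. After all the layers the point is in
every `U_i`, and on the bounding hyperplane of the last one that moved it.

*The error.* On a cap, `∇φ` differs from `∇φ(p_i)` by at most `D √(2rδ)`, so a move of length `t`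
costs at most `D √(2rδ) t` (`cap_error`). A move of length `t` also lowers `‖x‖²` by `2st + t²`.
Since `‖x‖²` only goes from at most `r²` down to at least `s²`, the total length of the moves is at
most `(r² - s²)/(2s) ≤ (1 + √2)/2 · δ`, whatever the dimension and the number of layers.
-/

/-- Two caps `{⟪b, z⟫ ≤ -s}` of a ball of radius `r ≤ √2 s` can only meet if the angle between
their normals is at most 90°. -/
lemma inner_nonneg_of_caps_meet {E : Type*} [NormedAddCommGroup E] [InnerProductSpace ℝ E]
    {b c z : E} {r s : ℝ} (hb : ‖b‖ = 1) (hc : ‖c‖ = 1) (hr : 0 < r) (hs : 0 < s)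
    (hrs : r ^ 2 ≤ 2 * s ^ 2) (hz : ‖z‖ ≤ r) (h1 : ⟪b, z⟫ ≤ -s) (h2 : ⟪c, z⟫ ≤ -s) :
    0 ≤ ⟪b, c⟫ := by
  -- Cauchy–Schwarz for `b + c` and `z`.
  have h3 : |⟪b + c, z⟫| ≤ ‖b + c‖ * ‖z‖ := abs_real_inner_le_norm _ _
  rw [inner_add_left] at h3
  have h4 : 2 * s ≤ ‖b + c‖ * r := by
    have := neg_abs_le (⟪b, z⟫ + ⟪c, z⟫)
    have := mul_le_mul_of_nonneg_left hz (norm_nonneg (b + c))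
    linarith
  have h5 : ‖b + c‖ ^ 2 = 2 + 2 * ⟪b, c⟫ := by
    rw [norm_add_sq_real, hb, hc]; ring
  have h6 : (2 * s) ^ 2 ≤ (‖b + c‖ * r) ^ 2 := by gcongr
  rw [mul_pow ‖b + c‖, h5] at h6
  by_contra! h
  nlinarith [mul_neg_of_neg_of_pos h (pow_pos hr 2)]

/-- Moving a unit normal distance `t` up to the hyperplane `⟪b, ·⟫ = -s` lowers `‖z‖²` by
`2st + t²`. -/
lemma norm_sq_add_smul {E : Type*} [NormedAddCommGroup E] [InnerProductSpace ℝ E]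
    {b z : E} {s t : ℝ} (hb : ‖b‖ = 1) (ht : t = -(⟪b, z⟫ + s)) :
    ‖z + t • b‖ ^ 2 = ‖z‖ ^ 2 - 2 * s * t - t ^ 2 := by
  rw [norm_add_sq_real, norm_smul, hb, inner_smul_right, real_inner_comm, Real.norm_eq_abs,
    mul_one, sq_abs]
  have : ⟪b, z⟫ = -s - t := by linarith
  rw [this]; ring

/-- A bound on the second derivative makes the first derivative Lipschitz on the ball. -/
lemma norm_fderiv_sub_le {E : Type*} [NormedAddCommGroup E] [NormedSpace ℝ E]
    {R D : ℝ} {φ : E → ℝ} (hφ : ContDiffOn ℝ 2 φ (Metric.ball 0 R))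
    (hφD : ∀ z ∈ Metric.ball (0 : E) R,
      ‖iteratedFDerivWithin ℝ 2 φ (Metric.ball 0 R) z‖ ≤ D)
    {p z : E} (hp : p ∈ Metric.ball (0 : E) R) (hz : z ∈ Metric.ball (0 : E) R) :
    ‖fderiv ℝ φ z - fderiv ℝ φ p‖ ≤ D * ‖z - p‖ := by
  have hu : UniqueDiffOn ℝ (Metric.ball (0 : E) R) := Metric.isOpen_ball.uniqueDiffOn
  have h1 : ContDiffOn ℝ 1 (fderivWithin ℝ φ (Metric.ball 0 R)) (Metric.ball 0 R) :=
    hφ.fderivWithin hu (by norm_num)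
  rw [← fderivWithin_of_isOpen Metric.isOpen_ball hz, ← fderivWithin_of_isOpen Metric.isOpen_ball hp]
  refine (convex_ball (0 : E) R).norm_image_sub_le_of_norm_fderivWithin_le
    (h1.differentiableOn one_ne_zero) (fun w hw => ?_) hp hz
  have h2 := hφD w hw
  rw [← norm_iteratedFDerivWithin_fderivWithin hu hw, norm_iteratedFDerivWithin_one _ (hu w hw)]
    at h2
  exact h2

/-- Within a cap, `φ` changes between two points like its linearisation at the foot `-s • b` of the
cap, up to `D √(2rδ)` times their distance. -/
lemma cap_error {d : ℕ} {δ r R D : ℝ} (hδ : 0 < δ) (hs : 0 < r - δ) (hrR : r < R) (hD : 0 ≤ D)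
    {φ : EuclideanSpace ℝ (Fin d) → ℝ}
    (hφ : ContDiffOn ℝ 2 φ (Metric.ball 0 R))
    (hφD : ∀ z ∈ Metric.ball (0 : EuclideanSpace ℝ (Fin d)) R,
      ‖iteratedFDerivWithin ℝ 2 φ (Metric.ball 0 R) z‖ ≤ D)
    {b z w : EuclideanSpace ℝ (Fin d)} (hb : ‖b‖ = 1)
    (hz : ‖z‖ ≤ r) (hzb : ⟪b, z⟫ ≤ -(r - δ)) (hw : ‖w‖ ≤ r) (hwb : ⟪b, w⟫ ≤ -(r - δ)) :
    |φ w - φ z - ⟪w - z, gradient φ (-(r - δ) • b)⟫| ≤ D * √(2 * r * δ) * ‖w - z‖ := by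
  set p := -(r - δ) • b with hp
  have hpn : p ∈ Metric.ball (0 : EuclideanSpace ℝ (Fin d)) R := by
    rw [mem_ball_zero_iff, hp, norm_smul, hb, Real.norm_eq_abs, abs_neg, abs_of_pos hs]; linarith
  let C : Set (EuclideanSpace ℝ (Fin d)) :=
    Metric.closedBall 0 r ∩ {y | ⟪b, y⟫ ≤ -(r - δ)}
  have hC : Convex ℝ C :=
    (convex_closedBall 0 r).inter (convex_halfSpace_le (innerₛₗ ℝ b).isLinear _)
  have hmem : ∀ y, ‖y‖ ≤ r → ⟪b, y⟫ ≤ -(r - δ) → y ∈ C := fun y h1 h2 =>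
    ⟨by simpa using h1, h2⟩
  have hder : ∀ y ∈ C, HasFDerivWithinAt φ (fderiv ℝ φ y) C y := by
    rintro y ⟨hy, -⟩
    have hyR : y ∈ Metric.ball (0 : EuclideanSpace ℝ (Fin d)) R := by
      rw [mem_closedBall_zero_iff] at hy; rw [mem_ball_zero_iff]; linarith
    exact ((hφ.differentiableOn two_ne_zero).differentiableAt
      (Metric.isOpen_ball.mem_nhds hyR)).hasFDerivAt.hasFDerivWithinAt
  have hbd : ∀ y ∈ C, ‖fderiv ℝ φ y - fderiv ℝ φ p‖ ≤ D * √(2 * r * δ) := by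
    rintro y ⟨hy, hyb⟩
    rw [mem_closedBall_zero_iff] at hy
    rw [Set.mem_ofPred_eq] at hyb
    have hyR : y ∈ Metric.ball (0 : EuclideanSpace ℝ (Fin d)) R := by
      rw [mem_ball_zero_iff]; linarith
    refine (norm_fderiv_sub_le hφ hφD hpn hyR).trans (mul_le_mul_of_nonneg_left ?_ hD)
    apply Real.le_sqrt_of_sq_le
    rw [norm_sub_sq_real, hp, norm_smul, hb, inner_smul_right, real_inner_comm, Real.norm_eq_abs,
      mul_one, sq_abs]
    have := mul_le_mul_of_nonneg_left hyb hs.le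
    have : ‖y‖ ^ 2 ≤ r ^ 2 := by gcongr
    nlinarith [sq_nonneg δ]
  have := hC.norm_image_sub_le_of_norm_hasFDerivWithin_le' hder hbd (hmem z hz hzb) (hmem w hw hwb)
  rw [Real.norm_eq_abs] at this
  convert this using 4
  rw [gradient, real_inner_comm, InnerProductSpace.toDual_symm_apply]

/-- A point of a set on the bounding hyperplane of a half-space containing the set is a frontier
point. -/
lemma mem_frontier_of_supporting {E : Type*} [NormedAddCommGroup E] [InnerProductSpace ℝ E]
    {P : Set E} {b p : E} {s : ℝ} (hb : ‖b‖ = 1) (hP : ∀ x ∈ P, 0 ≤ ⟪b, x⟫ + s) (hp : p ∈ P)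
    (h0 : ⟪b, p⟫ + s = 0) : p ∈ frontier P := by
  refine ⟨subset_closure hp, fun hi => ?_⟩
  obtain ⟨e, he, hball⟩ := Metric.mem_nhds_iff.1 (mem_interior_iff_mem_nhds.1 hi)
  have hq : p - (e / 2) • b ∈ P := by
    apply hball
    rw [Metric.mem_ball, dist_eq_norm, sub_sub_cancel_left, norm_neg, norm_smul, hb,
      Real.norm_eq_abs, abs_of_pos (half_pos he)]
    linarith
  have := hP _ hq
  rw [inner_sub_right, inner_smul_right, real_inner_self_eq_norm_sq, hb] at this
  linarith

/-- **Image of the graph under a polytopal projection.** With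
`𝒫 = ∩_i {x : ⟪β_i,x⟫ + (r−δ) ≥ 0}` satisfying `B̄_{r−δ}^d ⊆ 𝒫 ⊆ B̄_r^d` and
`Π = π_m ∘ ⋯ ∘ π_1` the composition of the projection layers with parameters
`(β_i, r−δ, ⟪β_i,∇φ(p_i)⟫)`, `p_i = −(r−δ)β_i`: `Π` fixes the graph of `φ` over `𝒫` and maps
the graph over `B̄_r^d \ 𝒫` into the `ε`-band of `φ` over `∂𝒫`, with
`ε = ((1+√2)/2)·(3D/√2)·(d−1)·√r·δ^(3/2)`. -/
theorem image_of_graph_polytopal_projection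
    (d : ℕ) (hd : 2 ≤ d) (δ r R D : ℝ) (hδ : 0 < δ) (hrR : r < R) (hD : 0 ≤ D)
    (hδr : δ ≤ r * (1 - 1 / Real.sqrt 2))
    (φ : EuclideanSpace ℝ (Fin d) → ℝ)
    (hφ : ContDiffOn ℝ 2 φ (Metric.ball 0 R))
    (hφD : ∀ z ∈ Metric.ball (0 : EuclideanSpace ℝ (Fin d)) R,
      ‖iteratedFDerivWithin ℝ 2 φ (Metric.ball 0 R) z‖ ≤ D)
    (m : ℕ) (β : ℕ → EuclideanSpace ℝ (Fin d)) (hβ : ∀ i < m, ‖β i‖ = 1)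
    (P : Set (EuclideanSpace ℝ (Fin d)))
    (hP : P = {x : EuclideanSpace ℝ (Fin d) | ∀ i < m, 0 ≤ ⟪β i, x⟫ + (r - δ)})
    (hPin : Metric.closedBall (0 : EuclideanSpace ℝ (Fin d)) (r - δ) ⊆ P)
    (hPout : P ⊆ Metric.closedBall (0 : EuclideanSpace ℝ (Fin d)) r) :
    (∀ x ∈ P,
      iterComp (fun i => projLayer (β i) (r - δ) ⟪β i, gradient φ (-(r - δ) • β i)⟫) m
        (x, φ x) = (x, φ x)) ∧
    (∀ x : EuclideanSpace ℝ (Fin d), ‖x‖ ≤ r → x ∉ P →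
      iterComp (fun i => projLayer (β i) (r - δ) ⟪β i, gradient φ (-(r - δ) • β i)⟫) m
        (x, φ x) ∈
        epsBand φ (Metric.ball 0 R) (frontier P)
          (((1 + Real.sqrt 2) / 2) * (3 * D / Real.sqrt 2) * ((d : ℝ) - 1) *
            Real.sqrt r * δ ^ ((3 : ℝ) / 2))) := by
  have h2pos : 0 < √(2 : ℝ) := by positivity
  have hsq2 : √(2 : ℝ) * √2 = 2 := Real.mul_self_sqrt (by norm_num)
  have h12 : 1 < √(2 : ℝ) := by nlinarith
  have hr : 0 < r := by
    have h1 : 0 < 1 - 1 / √(2 : ℝ) := by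
      rw [sub_pos, div_lt_one h2pos]; exact h12
    exact pos_of_mul_pos_left (hδ.trans_le hδr) h1.le
  have hrs : r ≤ √2 * (r - δ) := by
    have h1 : r / √2 ≤ r - δ := by
      rw [mul_sub, mul_one, mul_one_div] at hδr; linarith
    rw [div_le_iff₀ h2pos] at h1; linarith
  have hs : 0 < r - δ := pos_of_mul_pos_right (hr.trans_le hrs) h2pos.le
  have hrs2 : r ^ 2 ≤ 2 * (r - δ) ^ 2 := by
    have : r ^ 2 ≤ (√2 * (r - δ)) ^ 2 := by gcongr
    rwa [mul_pow, Real.sq_sqrt (by norm_num)] at this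
  have hmemP : ∀ x, x ∈ P ↔ ∀ i < m, 0 ≤ ⟪β i, x⟫ + (r - δ) := fun x => by rw [hP]; rfl
  set F := fun i => projLayer (β i) (r - δ) ⟪β i, gradient φ (-(r - δ) • β i)⟫ with hF
  constructor
  · intro x hx
    have key : ∀ k ≤ m, iterComp F k (x, φ x) = (x, φ x) := by
      intro k
      induction k with
      | zero => intro _; rfl
      | succ k ih =>
        intro hk
        have hin := (hmemP x).1 hx k hk
        change F k (iterComp F k (x, φ x)) = _
        rw [ih (by omega)]
        simp only [hF, projLayer, max_eq_left (neg_nonpos.2 hin), zero_smul, zero_mul, add_zero]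
    exact key m le_rfl
  · intro x hxr hxP
    set K := D * √(2 * r * δ) with hK
    -- The last clause is the error bound `K * (total length of the moves)`, with the total length
    -- `T` replaced by the bound `2 (r - δ) T ≤ ‖x‖² - ‖x_k‖²`.
    have key : ∀ k ≤ m, ‖(iterComp F k (x, φ x)).1‖ ≤ r ∧
        (∀ i < k, 0 ≤ ⟪β i, (iterComp F k (x, φ x)).1⟫ + (r - δ)) ∧
        ((iterComp F k (x, φ x)).1 = x ∨
          ∃ j < k, ⟪β j, (iterComp F k (x, φ x)).1⟫ + (r - δ) = 0) ∧
        2 * (r - δ) * |φ (iterComp F k (x, φ x)).1 - (iterComp F k (x, φ x)).2| ≤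
          K * (‖x‖ ^ 2 - ‖(iterComp F k (x, φ x)).1‖ ^ 2) := by
      intro k
      induction k with
      | zero => intro _; simpa [iterComp] using hxr
      | succ k ih =>
        intro hk
        obtain ⟨ha, hb, hc, he⟩ := ih (by omega)
        change ‖(F k (iterComp F k (x, φ x))).1‖ ≤ r ∧
          (∀ i < k + 1, 0 ≤ ⟪β i, (F k (iterComp F k (x, φ x))).1⟫ + (r - δ)) ∧
          ((F k (iterComp F k (x, φ x))).1 = x ∨
            ∃ j < k + 1, ⟪β j, (F k (iterComp F k (x, φ x))).1⟫ + (r - δ) = 0) ∧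
          2 * (r - δ) * |φ (F k (iterComp F k (x, φ x))).1 - (F k (iterComp F k (x, φ x))).2| ≤
            K * (‖x‖ ^ 2 - ‖(F k (iterComp F k (x, φ x))).1‖ ^ 2)
        generalize iterComp F k (x, φ x) = q at *
        obtain ⟨z, y⟩ := q
        simp only at ha hb hc he
        have hbk := hβ k hk
        rcases le_or_gt 0 (⟪β k, z⟫ + (r - δ)) with hin | hout
        · have hFk : F k (z, y) = (z, y) := by
            simp only [hF, projLayer, max_eq_left (neg_nonpos.2 hin), zero_smul, zero_mul, add_zero]
          rw [hFk]
          refine ⟨ha, fun i hi => ?_, ?_, he⟩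
          · rcases Nat.lt_succ_iff_lt_or_eq.1 hi with h | rfl
            · exact hb i h
            · exact hin
          · exact hc.imp id fun ⟨j, hj, h⟩ => ⟨j, by omega, h⟩
        · obtain ⟨t, ht⟩ : ∃ t, t = -(⟪β k, z⟫ + (r - δ)) := ⟨_, rfl⟩
          have htpos : 0 < t := by linarith
          set w := z + t • β k with hw
          have hFk : F k (z, y) = (w, y + t * ⟪β k, gradient φ (-(r - δ) • β k)⟫) := by
            simp only [hF, projLayer, ← ht, max_eq_right htpos.le, hw]
          rw [hFk]
          simp only
          have hnw : ‖w‖ ^ 2 = ‖z‖ ^ 2 - 2 * (r - δ) * t - t ^ 2 := norm_sq_add_smul hbk ht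
          have hwr : ‖w‖ ≤ r := by
            refine le_trans (abs_le_of_sq_le_sq' ?_ (norm_nonneg z)).2 ha
            nlinarith [mul_pos hs htpos]
          have hwk : ⟪β k, w⟫ + (r - δ) = 0 := by
            rw [hw, inner_add_right, inner_smul_right, real_inner_self_eq_norm_sq, hbk]; linarith
          refine ⟨hwr, fun i hi => ?_, Or.inr ⟨k, by omega, hwk⟩, ?_⟩
          · rcases Nat.lt_succ_iff_lt_or_eq.1 hi with h | rfl
            · -- Having left `U_i`, the point would be in the caps `i` and `k`, so the move along
              -- `β k` could not have decreased `⟪β i, ·⟫`.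
              by_contra! hneg
              have hang : 0 ≤ ⟪β i, β k⟫ :=
                inner_nonneg_of_caps_meet (hβ i (by omega)) hbk hr hs hrs2 hwr
                  (by linarith) (by linarith)
              have hbi := hb i h
              rw [hw, inner_add_right, inner_smul_right] at hneg
              nlinarith [mul_nonneg htpos.le hang]
            · exact hwk.ge
          · have hcap := cap_error hδ hs hrR hD hφ hφD hbk ha (by linarith) hwr
              (by linarith : ⟪β k, w⟫ ≤ -(r - δ))
            have hwz : w - z = t • β k := by rw [hw]; abel
            rw [hwz, norm_smul, hbk, inner_smul_left, Real.norm_eq_abs, abs_of_pos htpos, mul_one,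
              ← hK] at hcap
            simp only [conj_trivial] at hcap
            set c := ⟪β k, gradient φ (-(r - δ) • β k)⟫
            have htri : |φ w - (y + t * c)| ≤ |φ z - y| + K * t := by
              have : φ w - (y + t * c) = (φ z - y) + (φ w - φ z - t * c) := by ring
              rw [this]
              exact (abs_add_le _ _).trans (by gcongr)
            have hK0 : 0 ≤ K := by positivity
            have := mul_le_mul_of_nonneg_left htri (by positivity : 0 ≤ 2 * (r - δ))
            rw [hnw]
            nlinarith [mul_nonneg hK0 (sq_nonneg t)]
    obtain ⟨ha, hb, hc, he⟩ := key m le_rfl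
    generalize iterComp F m (x, φ x) = q at *
    obtain ⟨w, y⟩ := q
    simp only at ha hb hc he
    have hwP : w ∈ P := (hmemP w).2 hb
    rcases hc with rfl | ⟨j, hj, hwj⟩
    · exact absurd hwP hxP
    refine ⟨⟨by rw [mem_ball_zero_iff]; simp only; linarith, ?_⟩, ?_⟩
    · exact mem_frontier_of_supporting (hβ j hj) (fun x hx => (hmemP x).1 hx j hj) hwP hwj
    · simp only
      have hsw : r - δ ≤ ‖w‖ := by
        have := neg_le_of_abs_le (abs_real_inner_le_norm (β j) w)
        rw [hβ j hj, one_mul] at this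
        linarith
      have hsw2 : (r - δ) ^ 2 ≤ ‖w‖ ^ 2 := by gcongr
      have hxr2 : ‖x‖ ^ 2 ≤ r ^ 2 := by gcongr
      have hK0 : 0 ≤ K := by positivity
      have hd1 : (1 : ℝ) ≤ (d : ℝ) - 1 := by
        have : (2 : ℝ) ≤ d := by exact_mod_cast hd
        linarith
      have hdrop : ‖x‖ ^ 2 - ‖w‖ ^ 2 ≤ δ * ((1 + √2) * (r - δ)) := by
        nlinarith [mul_le_mul_of_nonneg_left hrs hδ.le]
      have hpow : δ ^ ((3 : ℝ) / 2) = δ * √δ := by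
        rw [Real.sqrt_eq_rpow, ← Real.rpow_one_add' hδ.le (by norm_num)]; norm_num
      have hKeq : K = D * (√2 * √r * √δ) := by
        rw [hK, Real.sqrt_mul (by positivity), Real.sqrt_mul (by norm_num)]
      have h32 : √(2 : ℝ) ≤ 3 / √2 * ((d : ℝ) - 1) := by
        have : √(2 : ℝ) ≤ 3 / √2 := by rw [le_div_iff₀ h2pos]; linarith
        exact this.trans (le_mul_of_one_le_right (by positivity) hd1)
      have hfin : K * (δ * ((1 + √2) * (r - δ))) ≤ 2 * (r - δ) *
          (((1 + √2) / 2) * (3 * D / √2) * ((d : ℝ) - 1) * √r * δ ^ ((3 : ℝ) / 2)) := by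
        rw [hKeq, hpow]
        calc D * (√2 * √r * √δ) * (δ * ((1 + √2) * (r - δ)))
            = √2 * (D * √r * √δ * δ * (1 + √2) * (r - δ)) := by ring
          _ ≤ (3 / √2 * ((d : ℝ) - 1)) * (D * √r * √δ * δ * (1 + √2) * (r - δ)) := by
              gcongr
          _ = _ := by ring
      exact le_of_mul_le_mul_left
        (he.trans ((mul_le_mul_of_nonneg_left hdrop hK0).trans hfin)) (by positivity)
end

section
/- Polytope from a net of the sphere: let d ≥ 1, 0 < δ < r, and let N be a finite ε-net of the sphere S_r = {x ∈ ℝ^d : ‖x‖ = r} with ε = √(δr/2). For each q ∈ N define the half-space U_q = {x ∈ ℝ^d : ⟪q, x⟫ ≤ r(r−δ)} (the closed half-space containing the origin whose boundary hyperplane is tangent to the ball of radius r−δ at the point (r−δ)q/r), and let 𝒫 = ∩_{q ∈ N} U_q. Then B̄_{r−δ}^d ⊆ 𝒫 ⊆ B̄_r^d. -/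
open scoped RealInnerProductSpace

/-!
The first inclusion is Cauchy–Schwarz: `⟪q, x⟫ ≤ ‖q‖ ‖x‖ ≤ r (r - δ)`.

For the second, let `‖x‖ > r`, let `p = (r / ‖x‖) x` be the radial projection of `x` to the sphere,
and let `q` be a net point with `‖p - q‖² ≤ δ r / 2`. Since `‖p‖ = ‖q‖ = r`, polarization gives
`⟪q, p⟫ ≥ r² - δ r / 4 > r (r - δ) > 0`. As `x` is a multiple of `p` by a factor greater than `1`,
also `⟪q, x⟫ > r (r - δ)`, so `x` lies outside the half-space of `q`.
-/

/-- **Polytope from a net of the sphere.** If `N` is a finite `ε`-net of the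
sphere of radius `r` with `ε = √(δr/2)`, and to each `q ∈ N` we associate the half-space
`U_q = {x : ⟪q,x⟫ ≤ r(r−δ)}` tangent to the ball of radius `r−δ`, then the polytope
`𝒫 = ∩_q U_q` satisfies `B̄_{r−δ}^d ⊆ 𝒫 ⊆ B̄_r^d`. -/
theorem polytope_from_sphere_net
    (d : ℕ) (hd : 1 ≤ d) (r δ : ℝ) (hδ : 0 < δ) (hδr : δ < r)
    (N : Finset (EuclideanSpace ℝ (Fin d)))
    (hNsphere : ∀ q ∈ N, ‖q‖ = r)
    (hNnet : ∀ p : EuclideanSpace ℝ (Fin d), ‖p‖ = r →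
      ∃ q ∈ N, ‖p - q‖ ≤ Real.sqrt (δ * r / 2)) :
    Metric.closedBall (0 : EuclideanSpace ℝ (Fin d)) (r - δ)
      ⊆ {x : EuclideanSpace ℝ (Fin d) | ∀ q ∈ N, ⟪q, x⟫ ≤ r * (r - δ)} ∧
    {x : EuclideanSpace ℝ (Fin d) | ∀ q ∈ N, ⟪q, x⟫ ≤ r * (r - δ)}
      ⊆ Metric.closedBall (0 : EuclideanSpace ℝ (Fin d)) r := by
  have hr : 0 < r := hδ.trans hδr
  constructor
  · intro x hx q hq
    rw [mem_closedBall_zero_iff] at hx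
    calc ⟪q, x⟫ ≤ ‖q‖ * ‖x‖ := real_inner_le_norm q x
      _ ≤ r * (r - δ) := by
        rw [hNsphere q hq]
        exact mul_le_mul_of_nonneg_left hx hr.le
  · intro x hx
    rw [mem_closedBall_zero_iff]
    by_contra! hlt
    have hx0 : 0 < ‖x‖ := hr.trans hlt
    have hp : ‖(r / ‖x‖) • x‖ = r := by
      rw [norm_smul, Real.norm_of_nonneg (by positivity), div_mul_cancel₀ _ hx0.ne']
    obtain ⟨q, hq, hpq⟩ := hNnet _ hp
    have hsq : ‖(r / ‖x‖) • x - q‖ ^ 2 ≤ δ * r / 2 :=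
      (Real.le_sqrt (norm_nonneg _) (by positivity)).1 hpq
    rw [norm_sub_sq_real, hp, hNsphere q hq, real_inner_smul_left, real_inner_comm] at hsq
    have hqx : ⟪q, x⟫ ≤ r * (r - δ) := hx q hq
    have hpos : 0 < r * (r - δ) := mul_pos hr (sub_pos.2 hδr)
    have hle : r / ‖x‖ * ⟪q, x⟫ ≤ r * (r - δ) :=
      calc r / ‖x‖ * ⟪q, x⟫ ≤ r / ‖x‖ * (r * (r - δ)) :=
            mul_le_mul_of_nonneg_left hqx (by positivity)
        _ ≤ r * (r - δ) := mul_le_of_le_one_left hpos.le ((div_le_one hx0).2 hlt.le)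
    nlinarith [mul_pos hδ hr]
end

section
/- Circumradius reduction: let d ≥ 1, 0 < δ < r, and let N be a finite ε-net of the sphere S_r = {x ∈ ℝ^d : ‖x‖ = r} with ε = √(δr/2). For each q ∈ N define U_q = {x ∈ ℝ^d : ⟪q, x⟫ ≤ r(r−δ)}, and let 𝒫 = ∩_{q ∈ N} U_q. Then every x ∈ 𝒫 satisfies ‖x‖ ≤ r − (3/4)δ. -/
/-! The net is applied at the radial projection `p = (r / ‖x‖) • x` of a nonzero `x`. A net point
`q` with `‖p - q‖² ≤ δr/2` on the same sphere satisfies `⟪p, q⟫ ≥ r² - δr/4` by the polarization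
identity, so the constraint of `q` gives `‖x‖ (r - δ/4) ≤ ⟪q, x⟫ ≤ r (r - δ)`. The bound follows from
`(r - 3δ/4) (r - δ/4) = r (r - δ) + 3δ²/16`. -/

open scoped RealInnerProductSpace

/-- **Circumradius reduction.** If `N` is a finite `ε`-net of the sphere of
radius `r` with `ε = √(δr/2)`, then every point of the polytope
`𝒫 = ∩_{q ∈ N} {x : ⟪q,x⟫ ≤ r(r−δ)}` has norm at most `r − (3/4)δ`. -/
theorem circumradius_reduction
    (d : ℕ) (hd : 1 ≤ d) (r δ : ℝ) (hδ : 0 < δ) (hδr : δ < r)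
    (N : Finset (EuclideanSpace ℝ (Fin d)))
    (hNsphere : ∀ q ∈ N, ‖q‖ = r)
    (hNnet : ∀ p : EuclideanSpace ℝ (Fin d), ‖p‖ = r →
      ∃ q ∈ N, ‖p - q‖ ≤ Real.sqrt (δ * r / 2)) :
    ∀ x : EuclideanSpace ℝ (Fin d), (∀ q ∈ N, ⟪q, x⟫ ≤ r * (r - δ)) →
      ‖x‖ ≤ r - (3 / 4) * δ := by
  intro x hx
  have hr : 0 < r := hδ.trans hδr
  rcases eq_or_ne x 0 with rfl | hx0
  · rw [norm_zero]; linarith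
  have hn : 0 < ‖x‖ := norm_pos_iff.mpr hx0
  have hp : ‖(r / ‖x‖) • x‖ = r := by
    rw [norm_smul, Real.norm_of_nonneg (by positivity)]
    field_simp
  obtain ⟨q, hq, hpq⟩ := hNnet _ hp
  have hqr := hNsphere q hq
  have hqx := hx q hq
  have hsq : ‖(r / ‖x‖) • x - q‖ ^ 2 ≤ δ * r / 2 :=
    (Real.le_sqrt (norm_nonneg _) (by positivity)).mp hpq
  rw [norm_sub_sq_real, hp, hqr, real_inner_smul_left, real_inner_comm] at hsq
  have hcap : r ^ 2 - δ * r / 4 ≤ r / ‖x‖ * (r * (r - δ)) := by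
    have : r / ‖x‖ * ⟪q, x⟫ ≤ r / ‖x‖ * (r * (r - δ)) := by gcongr
    linarith
  have hmul : ‖x‖ * (r - δ / 4) ≤ r * (r - δ) := by
    rw [div_mul_eq_mul_div, le_div_iff₀ hn] at hcap
    refine le_of_mul_le_mul_left ?_ hr
    linarith
  refine le_of_mul_le_mul_right ?_ (show 0 < r - δ / 4 by linarith)
  nlinarith [sq_nonneg δ]
end

section
/- Number of polytopes: let R > 0 and 0 < δ ≤ R(1 − 1/√2). Let (r_k)_{k=0}^K be positive real numbers with r_0 = R such that for every k < K, r_{k+1} ≤ r_k − (3/4)·δ_k, where δ_k = min(δ, r_k(1 − 1/√2)). If r_k > δ for all k < K, then K ≤ 7R/(3δ). -/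
/-!
Read the recursion backwards from `r (K - 1) > δ`. The constant `c = 1 - 1/√2` satisfies
`7/24 ≤ c ≤ 0.2935`, so going back one step increases the radius either by at least `(3/4) δ` or by
a factor of at least `1 / (1 - (3/4)(7/24)) = 32/25` (`radius_back_step`). Four steps back from
`r (K - 1)` the radius is therefore at least `(32/25)^4 δ > 2.68 δ`; from there on the factor
`32/25` gains more than `(3/4) δ`, so every further step back adds at least `(3/4) δ`. Hence
`R ≥ (2.68 + (3/4)(K - 5)) δ` for `K ≥ 5`, that is `K ≤ 4R/(3δ) + 1.43`. Since
`R ≥ δ / c ≥ 3.4 δ`, the additive constant is absorbed by the remaining `R/δ`; the same lower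
bound on `R` settles `K < 5`.
-/

/-- The bound `(32/25) x = x / (1 - (3/4)(7/24))` comes from the case where the minimum is
`c * y`, the other one from the case where it is `δ`. -/
lemma radius_back_step {δ c x y : ℝ} (hc : 7 / 24 ≤ c) (hy : 0 < y)
    (h : x ≤ y - (3 / 4) * min δ (y * c)) : x + 3 / 4 * δ ≤ y ∨ 32 / 25 * x ≤ y := by
  rcases min_cases δ (y * c) with ⟨hm, -⟩ | ⟨hm, -⟩
  · left
    rw [hm] at h
    linarith
  · right
    rw [hm] at h
    nlinarith

lemma one_sub_inv_sqrt_two_bounds :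
    7 / 24 ≤ 1 - 1 / Real.sqrt 2 ∧ 1 - 1 / Real.sqrt 2 ≤ 0.2935 := by
  have h0 : 0 < Real.sqrt 2 := by positivity
  have h1 : 24 / 17 ≤ Real.sqrt 2 := Real.le_sqrt_of_sq_le (by norm_num)
  have h2 : Real.sqrt 2 ≤ 1.415 := Real.sqrt_le_iff.mpr (by norm_num)
  have h3 : 1 / Real.sqrt 2 ≤ 17 / 24 := by
    rw [div_le_iff₀ h0]; linarith
  have h4 : 0.7065 ≤ 1 / Real.sqrt 2 := by
    rw [le_div_iff₀ h0]; linarith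
  constructor <;> linarith

/-- **Number of polytopes.** For the recursion `r_0 = R`,
`r_{k+1} ≤ r_k − (3/4)·δ_k` with `δ_k = min(δ, r_k(1 − 1/√2))`, if `r_k > δ` for all `k < K`
then `K ≤ 7R/(3δ)`. -/
theorem number_of_polytopes
    (R δ : ℝ) (hR : 0 < R) (hδ : 0 < δ) (hδR : δ ≤ R * (1 - 1 / Real.sqrt 2))
    (K : ℕ) (r : ℕ → ℝ) (hr0 : r 0 = R) (hpos : ∀ k ≤ K, 0 < r k)
    (hrec : ∀ k < K, r (k+1) ≤ r k - (3 / 4) * min δ (r k * (1 - 1 / Real.sqrt 2)))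
    (hbig : ∀ k < K, δ < r k) :
    (K : ℝ) ≤ 7 * R / (3 * δ) := by
  obtain ⟨hc1, hc2⟩ := one_sub_inv_sqrt_two_bounds
  have hRδ : 3.4 * δ ≤ R := by nlinarith
  rw [le_div_iff₀ (by positivity)]
  have hstep : ∀ k < K, r (k + 1) + 3 / 4 * δ ≤ r k ∨ 32 / 25 * r (k + 1) ≤ r k :=
    fun k hk => radius_back_step hc1 (hpos k hk.le) (hrec k hk)
  rcases lt_or_ge K 5 with hK | hK
  · have hK' : (K : ℝ) ≤ 4 := by exact_mod_cast Nat.le_of_lt_succ hK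
    nlinarith
  obtain ⟨n, rfl⟩ := Nat.exists_eq_add_of_le' hK
  have hback : ∀ i k : ℕ, k + i = n → (2.68 + 3 / 4 * (i : ℝ)) * δ ≤ r k := by
    intro i
    induction i with
    | zero =>
      rintro k rfl
      -- The constants are `(32/25)^j` rounded down.
      have b4 := hbig (k + 4) (by omega)
      have b3 : 1.28 * δ ≤ r (k + 3) := by
        rcases hstep (k + 3) (by omega) with h | h <;> linarith
      have b2 : 1.638 * δ ≤ r (k + 2) := by
        rcases hstep (k + 2) (by omega) with h | h <;> linarith
      have b1 : 2.096 * δ ≤ r (k + 1) := by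
        rcases hstep (k + 1) (by omega) with h | h <;> linarith
      push_cast
      rcases hstep k (by omega) with h | h <;> linarith
    | succ i ih =>
      intro k hk
      have h1 := ih (k + 1) (by omega)
      have hi : 0 ≤ (i : ℝ) * δ := by positivity
      push_cast
      rcases hstep k (by omega) with h | h <;> nlinarith
  have h := hback n 0 (by omega)
  rw [hr0] at h
  push_cast
  nlinarith
end

section
/- Cardinality of a net of the sphere: let d ≥ 2, r > 0, ε > 0. Then there exists a finite ε-net N of the sphere S_r = {x ∈ ℝ^d : ‖x‖ = r} with cardinality |N| ≤ 2d·(1 + 2r/ε)^(d−1). -/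
/-!
The proof is the volumetric packing argument, applied to a shell instead of a full ball.

A set of points of the sphere whose mutual distances exceed `ε`, chosen with the largest possible
cardinality, is an `ε`-net: a point at distance more than `ε` from all of them could be added. The
open balls of radius `ε / 2` around its points are disjoint, are contained in the ball of radius
`r + ε / 2` about the origin and avoid the ball of radius `r - ε / 2` (empty if `r < ε / 2`).
Comparing volumes, with `b = max (r - ε / 2) 0`,
`|N| (ε / 2) ^ d ≤ (r + ε / 2) ^ d - b ^ d ≤ d (r + ε / 2) ^ (d - 1) ε`,
where the last step is the mean value estimate; division by `(ε / 2) ^ d` gives the bound. The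
same bound for arbitrary separated sets (`card_le_of_separated`) shows that a largest one exists.
-/

open MeasureTheory Metric in
/-- The packing bound: separated finite subsets of the sphere are small, by comparing the volume
of the disjoint balls around their points with that of the shell containing these balls. -/
theorem card_le_of_separated
    (d : ℕ) (hd : 2 ≤ d) (r ε : ℝ) (hr : 0 < r) (hε : 0 < ε)
    (N : Finset (EuclideanSpace ℝ (Fin d))) (hN : ∀ q ∈ N, ‖q‖ = r)
    (hsep : ∀ p ∈ N, ∀ q ∈ N, p ≠ q → ε < ‖p - q‖) :
    (N.card : ℝ) ≤ 2 * d * (1 + 2 * r / ε) ^ (d - 1) := by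
  have : Nonempty (Fin d) := ⟨⟨0, by omega⟩⟩
  set b := max (r - ε / 2) 0 with hb
  have hb0 : 0 ≤ b := le_max_right _ _
  have hrb : r - ε / 2 ≤ b := le_max_left _ _
  have hbR : b ≤ r + ε / 2 := max_le (by linarith) (by linarith)
  set c : ℝ := volume.real (ball (0 : EuclideanSpace ℝ (Fin d)) 1) with hc
  have hcpos : 0 < c :=
    ENNReal.toReal_pos (measure_ball_pos volume _ one_pos).ne' measure_ball_lt_top.ne
  have hvol : ∀ (x : EuclideanSpace ℝ (Fin d)) {s : ℝ}, 0 ≤ s →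
      volume.real (ball x s) = s ^ d * c := fun x s hs => by
    rw [measureReal_def, Measure.addHaar_ball volume x hs, finrank_euclideanSpace_fin,
      ENNReal.toReal_mul, ENNReal.toReal_ofReal (pow_nonneg hs d), hc, measureReal_def]
  have hdisj : (N : Set (EuclideanSpace ℝ (Fin d))).PairwiseDisjoint
      (fun q => ball q (ε / 2)) := fun p hp q hq hpq => by
    refine ball_disjoint_ball ?_
    rw [dist_eq_norm]
    linarith [hsep p hp q hq hpq]
  have hunion : volume.real (⋃ q ∈ N, ball q (ε / 2)) = N.card * ((ε / 2) ^ d * c) := by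
    rw [measureReal_biUnion_finset hdisj (fun _ _ => measurableSet_ball)
      (fun _ _ => measure_ball_lt_top.ne),
      Finset.sum_congr rfl (fun q _ => hvol q (half_pos hε).le), Finset.sum_const, nsmul_eq_mul]
  have hdisj0 : Disjoint (⋃ q ∈ N, ball q (ε / 2))
      (ball (0 : EuclideanSpace ℝ (Fin d)) b) := by
    simp only [Set.disjoint_iUnion_left]
    intro q hq
    rcases le_total (r - ε / 2) 0 with h | h
    · simp [hb, max_eq_right h]
    · refine ball_disjoint_ball ?_
      rw [dist_zero_right, hN q hq, hb, max_eq_left h]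
      linarith
  have hsub : (⋃ q ∈ N, ball q (ε / 2)) ∪ ball (0 : EuclideanSpace ℝ (Fin d)) b ⊆
      ball 0 (r + ε / 2) := by
    refine Set.union_subset (Set.iUnion₂_subset fun q hq => ball_subset_ball' ?_)
      (ball_subset_ball hbR)
    rw [dist_zero_right, hN q hq]
    linarith
  have hmeas := measureReal_mono (μ := volume) hsub measure_ball_lt_top.ne
  rw [measureReal_union hdisj0 measurableSet_ball
    (measure_ne_top_of_subset (Set.subset_union_left.trans hsub) measure_ball_lt_top.ne)
    measure_ball_lt_top.ne, hunion, hvol _ hb0,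
    hvol _ (by positivity)] at hmeas
  have hcount : N.card * (ε / 2) ^ d ≤ (r + ε / 2) ^ d - b ^ d := by
    refine le_of_mul_le_mul_right ?_ hcpos
    linarith
  have hmvt : (r + ε / 2) ^ d - b ^ d ≤ ε * d * (r + ε / 2) ^ (d - 1) := by
    have h := (le_abs_self _).trans (abs_pow_sub_pow_le (r + ε / 2) b d)
    rw [abs_of_nonneg (sub_nonneg.2 hbR), abs_of_nonneg hb0,
      abs_of_nonneg (by positivity : 0 ≤ r + ε / 2), max_eq_left hbR] at h
    refine h.trans ?_
    gcongr
    linarith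
  have hscale : ε * d * (r + ε / 2) ^ (d - 1) =
      2 * d * (1 + 2 * r / ε) ^ (d - 1) * (ε / 2) ^ d := by
    have h1 : r + ε / 2 = (1 + 2 * r / ε) * (ε / 2) := by field_simp; ring
    have h2 : (ε / 2) ^ d = (ε / 2) ^ (d - 1) * (ε / 2) := by
      rw [← pow_succ, Nat.sub_add_cancel (by omega)]
    rw [h1, h2, mul_pow]
    ring
  exact le_of_mul_le_mul_right ((hcount.trans hmvt).trans_eq hscale) (by positivity)

/-- **Cardinality of a net of the sphere.** The sphere of radius `r` in `ℝ^d`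
admits a finite `ε`-net of cardinality at most `2d·(1 + 2r/ε)^(d−1)`. -/
theorem sphere_net_cardinality
    (d : ℕ) (hd : 2 ≤ d) (r ε : ℝ) (hr : 0 < r) (hε : 0 < ε) :
    ∃ N : Finset (EuclideanSpace ℝ (Fin d)),
      (∀ q ∈ N, ‖q‖ = r) ∧
      (∀ p : EuclideanSpace ℝ (Fin d), ‖p‖ = r → ∃ q ∈ N, ‖p - q‖ ≤ ε) ∧
      (N.card : ℝ) ≤ 2 * d * (1 + 2 * r / ε) ^ (d - 1) := by
  classical
  let S : Set (Finset (EuclideanSpace ℝ (Fin d))) :=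
    {N | (∀ q ∈ N, ‖q‖ = r) ∧ ∀ p ∈ N, ∀ q ∈ N, p ≠ q → ε < ‖p - q‖}
  have hbdd : BddAbove (Finset.card '' S) := by
    refine ⟨⌊2 * d * (1 + 2 * r / ε) ^ (d - 1)⌋₊, ?_⟩
    rintro _ ⟨N, hN, rfl⟩
    exact Nat.le_floor (card_le_of_separated d hd r ε hr hε N hN.1 hN.2)
  obtain ⟨N, hN, hcard⟩ := Nat.sSup_mem (s := Finset.card '' S) ⟨_, ∅, by simp [S], rfl⟩ hbdd
  refine ⟨N, hN.1, fun p hp => ?_, card_le_of_separated d hd r ε hr hε N hN.1 hN.2⟩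
  by_contra! hfar
  have hpN : p ∉ N := fun h => by simpa using hε.trans (hfar p h)
  have hins : insert p N ∈ S := by
    refine ⟨by simpa [hp] using hN.1, fun x hx y hy hxy => ?_⟩
    rcases Finset.mem_insert.1 hx with rfl | hx' <;> rcases Finset.mem_insert.1 hy with rfl | hy'
    · exact absurd rfl hxy
    · exact hfar y hy'
    · rw [norm_sub_rev]; exact hfar x hx'
    · exact hN.2 x hx' y hy' hxy
  have hle := le_csSup hbdd ⟨_, hins, rfl⟩
  rw [Finset.card_insert_of_notMem hpN, ← hcard] at hle
  omega
end

section
/- Preimage of a graph under a projection layer: let d ≥ 1, R > 0, let β ∈ ℝ^d be a unit vector, a ≥ 0, c ∈ ℝ, and let π be the projection layer with parameters (β, a, c). Let g : B_R^d → ℝ be continuous with graph Γ_g = {(x, g(x)) : x ∈ B_R^d}. Then there exists a continuous function g̃ : B_R^d → ℝ such that g̃(x) = g(x) for all x ∈ B_R^d with ⟪β,x⟫ + a ≥ 0, and {(x,y) ∈ B_R^d × ℝ : π(x,y) ∈ Γ_g} = {(x, g̃(x)) : x ∈ B_R^d}. -/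
/-! The layer moves `x` to the nearest point `x + t(x) β` of the half-space
`{⟪β, x⟫ + a ≥ 0}`. That half-space contains the origin, so the move does not increase the norm and
the first component preserves the ball. Hence `π(x, y)` lies on the graph of `g` exactly when
`y + t(x) c = g (x + t(x) β)`, and solving for `y` gives `g̃(x) = g (x + t(x) β) - t(x) c`. -/

open scoped RealInnerProductSpace

/-- Projecting onto a half-space containing the origin does not increase the norm. -/
lemma norm_add_max_smul_le {d : ℕ} (β x : EuclideanSpace ℝ (Fin d)) (hβ : ‖β‖ = 1) {a : ℝ}
    (ha : 0 ≤ a) : ‖x + max 0 (-(⟪β, x⟫ + a)) • β‖ ≤ ‖x‖ := by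
  rcases le_total 0 (⟪β, x⟫ + a) with h | h
  · rw [max_eq_left (neg_nonpos.mpr h), zero_smul, add_zero]
  · rw [max_eq_right (neg_nonneg.mpr h)]
    refine (sq_le_sq₀ (norm_nonneg _) (norm_nonneg _)).mp ?_
    rw [norm_add_sq_real, norm_smul, hβ, real_inner_smul_right, real_inner_comm β x, mul_one,
      Real.norm_eq_abs, sq_abs]
    -- With `t = -(⟪β, x⟫ + a)`, the increment `2 t ⟪β, x⟫ + t ^ 2` equals `-t ^ 2 - 2 a t`.
    nlinarith [mul_nonneg ha (neg_nonneg.mpr h), sq_nonneg (⟪β, x⟫ + a)]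

/-- **Preimage of a graph under a projection layer.** For a continuous
`g : B_R^d → ℝ` and a projection layer `π` with parameters `(β, a, c)`, `a ≥ 0`, the preimage
of the graph of `g` under `π` (within `B_R^d × ℝ`) is the graph of a continuous function `g̃`
that agrees with `g` on the half-space `{⟪β,x⟫ + a ≥ 0}`. -/
theorem preimage_of_graph_under_projection_layer
    (d : ℕ) (hd : 1 ≤ d) (R : ℝ) (hR : 0 < R)
    (β : EuclideanSpace ℝ (Fin d)) (hβ : ‖β‖ = 1) (a c : ℝ) (ha : 0 ≤ a)
    (g : EuclideanSpace ℝ (Fin d) → ℝ) (hg : ContinuousOn g (Metric.ball 0 R)) :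
    ∃ gt : EuclideanSpace ℝ (Fin d) → ℝ,
      ContinuousOn gt (Metric.ball 0 R) ∧
      (∀ x ∈ Metric.ball (0 : EuclideanSpace ℝ (Fin d)) R, 0 ≤ ⟪β, x⟫ + a → gt x = g x) ∧
      {p : EuclideanSpace ℝ (Fin d) × ℝ |
          p.1 ∈ Metric.ball (0 : EuclideanSpace ℝ (Fin d)) R ∧
          projLayer β a c p ∈ {q : EuclideanSpace ℝ (Fin d) × ℝ |
            q.1 ∈ Metric.ball (0 : EuclideanSpace ℝ (Fin d)) R ∧ q.2 = g q.1}}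
        = {p : EuclideanSpace ℝ (Fin d) × ℝ |
            p.1 ∈ Metric.ball (0 : EuclideanSpace ℝ (Fin d)) R ∧ p.2 = gt p.1} := by
  have hball : ∀ x ∈ Metric.ball (0 : EuclideanSpace ℝ (Fin d)) R,
      x + max 0 (-(⟪β, x⟫ + a)) • β ∈ Metric.ball (0 : EuclideanSpace ℝ (Fin d)) R := by
    intro x hx
    rw [mem_ball_zero_iff] at hx ⊢
    exact (norm_add_max_smul_le β x hβ ha).trans_lt hx
  refine ⟨fun x => g (x + max 0 (-(⟪β, x⟫ + a)) • β) - max 0 (-(⟪β, x⟫ + a)) * c, ?_, ?_, ?_⟩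
  · refine (hg.comp (Continuous.continuousOn (by fun_prop)) hball).sub
      (Continuous.continuousOn (by fun_prop))
  · intro x _ h
    simp only [max_eq_left (neg_nonpos.mpr h), zero_smul, add_zero, zero_mul, sub_zero]
  · ext ⟨x, y⟩
    simp only [Set.mem_ofPred_eq, projLayer]
    constructor
    · rintro ⟨hx, -, h⟩
      exact ⟨hx, eq_sub_of_add_eq h⟩
    · rintro ⟨hx, h⟩
      exact ⟨hx, hball x hx, add_eq_of_eq_sub h⟩
end
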